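/- arXiv:1403.3672 — 2 statements merged into one kernel-verified Lean document; each statement's English description precedes it below -/
import Mathlib

section
/- Every one-sorted relationally complete functional uniform preorder (A,R) is induced by an inclusion of partial combinatory algebras: there exist a partial binary operation on A making A a pca, and a sub-pca A_# ⊆ A, such that R = { r ⊆ A × A | ∃ a ∈ A_#, r ⊆ {(x, a·x) | a·x is defined} }. -/
/-!
Application on `A` is `a · b = c` iff `(a ∧ b, c) ∈ @`; functionality makes it a partial
operation. The designated elements are the `a` whose constant relation `{(x, a)}` lies in `R`,
i.e. the global points. Applying relational completeness to `r ∘ π₂` at `⊤` shows that every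
`r ∈ R` is contained in the graph of `(a · -)` for some designated `a` (`exists_tracker`). Curried once, the
first projection yields `k` (`exists_k`). Curried twice, the relation sending `(x ∧ y) ∧ z` to
`(x · z) · (y · z)` yields `s` (`exists_s`); the second currying is applied to a total relation,
which is why `s · x · y` is always defined.
-/

/-- A one-sorted uniform preorder. -/
structure UPO1 : Type 1 where
  A : Type
  R : Set (A → A → Prop)
  mem_of_le : ∀ {r s : A → A → Prop}, r ∈ R → (∀ a b, s a b → r a b) → s ∈ R
  id_mem : (fun a b => a = b) ∈ R
  comp_mem : ∀ {r s : A → A → Prop}, r ∈ R → s ∈ R → (fun a c => ∃ b, r a b ∧ s b c) ∈ R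

namespace UPO1

def Functional (𝔄 : UPO1) : Prop :=
  ∀ r ∈ 𝔄.R, ∀ a b b', r a b → r a b' → b = b'

end UPO1

/-- Finite completeness structure on a one-sorted uniform preorder. -/
structure FinComplete1 (𝔄 : UPO1) where
  top : 𝔄.A
  meet : 𝔄.A → 𝔄.A → 𝔄.A
  meet_mono : ∀ {r s : 𝔄.A → 𝔄.A → Prop}, r ∈ 𝔄.R → s ∈ 𝔄.R →
    (fun x y => ∃ a b c d, r a b ∧ s c d ∧ x = meet a c ∧ y = meet b d) ∈ 𝔄.R
  proj_left : (fun x y => ∃ a b, x = meet a b ∧ y = a) ∈ 𝔄.R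
  proj_right : (fun x y => ∃ a b, x = meet a b ∧ y = b) ∈ 𝔄.R
  dup : (fun a x => x = meet a a) ∈ 𝔄.R
  to_top : (fun _ x => x = top) ∈ 𝔄.R

/-- Relational completeness of a one-sorted finitely complete uniform preorder. -/
structure RelComplete1 (𝔄 : UPO1) (fc : FinComplete1 𝔄) where
  app : 𝔄.A → 𝔄.A → Prop
  app_mem : app ∈ 𝔄.R
  complete : ∀ r ∈ 𝔄.R, ∃ rt ∈ 𝔄.R, ∀ a : 𝔄.A, ∃ h : 𝔄.A, rt a h ∧
    ∀ b c, r (fc.meet a b) c → app (fc.meet h b) c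
/-- A (weak) partial combinatory algebra structure on a set. -/
structure PCAStruct (A : Type) where
  op : A → A → Option A
  k : A
  s : A
  k_spec : ∀ x y : A, ∃ kx : A, op k x = some kx ∧ op kx y = some x
  s_def : ∀ x y : A, ∃ (sx sxy : A), op s x = some sx ∧ op sx y = some sxy
  s_spec : ∀ x y z w : A,
    (∃ xz yz : A, op x z = some xz ∧ op y z = some yz ∧ op xz yz = some w) →
    ∃ (sx sxy : A), op s x = some sx ∧ op sx y = some sxy ∧ op sxy z = some w

/-- A sub-pca: a subset closed under application containing a choice of the combinators. -/
structure SubPCA {A : Type} (Pc : PCAStruct A) where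
  S : Set A
  closed : ∀ a ∈ S, ∀ b ∈ S, ∀ c : A, Pc.op a b = some c → c ∈ S
  k' : A
  k'_mem : k' ∈ S
  k'_spec : ∀ x y : A, ∃ kx : A, Pc.op k' x = some kx ∧ Pc.op kx y = some x
  s' : A
  s'_mem : s' ∈ S
  s'_def : ∀ x y : A, ∃ (sx sxy : A), Pc.op s' x = some sx ∧ Pc.op sx y = some sxy
  s'_spec : ∀ x y z w : A,
    (∃ xz yz : A, Pc.op x z = some xz ∧ Pc.op y z = some yz ∧ Pc.op xz yz = some w) →
    ∃ (sx sxy : A), Pc.op s' x = some sx ∧ Pc.op sx y = some sxy ∧ Pc.op sxy z = some w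

namespace UPO1

variable {𝔄 : UPO1} (fc : FinComplete1 𝔄)

/-- The pairing `⟨r, s⟩` of two relations with the same source. -/
def pairRel (r s : 𝔄.A → 𝔄.A → Prop) : 𝔄.A → 𝔄.A → Prop :=
  fun a x => ∃ b c, r a b ∧ s a c ∧ x = fc.meet b c

/-- Composition of relations in diagrammatic order. -/
def compRel (r s : 𝔄.A → 𝔄.A → Prop) : 𝔄.A → 𝔄.A → Prop :=
  fun a c => ∃ b, r a b ∧ s b c

/-- The graph of the first projection. -/
def fstRel : 𝔄.A → 𝔄.A → Prop := fun x y => ∃ a b, x = fc.meet a b ∧ y = a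

/-- The graph of the second projection. -/
def sndRel : 𝔄.A → 𝔄.A → Prop := fun x y => ∃ a b, x = fc.meet a b ∧ y = b

lemma compRel_mem {r s : 𝔄.A → 𝔄.A → Prop} (hr : r ∈ 𝔄.R) (hs : s ∈ 𝔄.R) :
    compRel r s ∈ 𝔄.R := 𝔄.comp_mem hr hs

lemma pairRel_mem {r s : 𝔄.A → 𝔄.A → Prop} (hr : r ∈ 𝔄.R) (hs : s ∈ 𝔄.R) :
    pairRel fc r s ∈ 𝔄.R := by
  refine 𝔄.mem_of_le (𝔄.comp_mem fc.dup (fc.meet_mono hr hs)) ?_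
  rintro a x ⟨b, c, hb, hc, rfl⟩
  exact ⟨_, rfl, a, b, a, c, hb, hc, rfl, rfl⟩

/-- The designated elements: those whose constant relation belongs to `R`. -/
def points (𝔄 : UPO1) : Set 𝔄.A := {a | (fun _ x => x = a) ∈ 𝔄.R}

/-- The image of a point under a relation in `R` is again a point. -/
lemma point_of_rel {r : 𝔄.A → 𝔄.A → Prop} (hr : r ∈ 𝔄.R) {a b : 𝔄.A}
    (ha : a ∈ points 𝔄) (hab : r a b) : b ∈ points 𝔄 := by
  refine 𝔄.mem_of_le (compRel_mem ha hr) ?_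
  rintro _ x rfl
  exact ⟨a, rfl, hab⟩

variable {fc} (rc : RelComplete1 𝔄 fc)

open Classical in
/-- The partial application: `a · b = c` iff `(a ∧ b, c) ∈ @`. -/
noncomputable def appOp (a b : 𝔄.A) : Option 𝔄.A :=
  if h : ∃ c, rc.app (fc.meet a b) c then some h.choose else none

lemma appOp_eq_some (hfun : 𝔄.Functional) {a b c : 𝔄.A} :
    appOp rc a b = some c ↔ rc.app (fc.meet a b) c := by
  unfold appOp
  split_ifs with h
  · rw [Option.some_inj]
    refine ⟨fun e => e ▸ h.choose_spec, fun hc => hfun _ rc.app_mem _ _ _ h.choose_spec hc⟩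
  · simp only [false_iff]
    exact fun hc => h ⟨c, hc⟩

/-- Every relation in `R` is tracked by a designated element. -/
lemma exists_tracker {r : 𝔄.A → 𝔄.A → Prop} (hr : r ∈ 𝔄.R) :
    ∃ h ∈ points 𝔄, ∀ b c, r b c → rc.app (fc.meet h b) c := by
  obtain ⟨rt, hrt, H⟩ := rc.complete _ (compRel_mem fc.proj_right hr)
  obtain ⟨h, hh, hc⟩ := H fc.top
  exact ⟨h, point_of_rel hrt fc.to_top hh,
    fun b c hbc => hc b c ⟨b, ⟨_, _, rfl, rfl⟩, hbc⟩⟩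

/-- Conversely, application of a designated element is a relation in `R`. -/
lemma app_point_mem {a : 𝔄.A} (ha : a ∈ points 𝔄) :
    (fun x y => rc.app (fc.meet a x) y) ∈ 𝔄.R := by
  refine 𝔄.mem_of_le (compRel_mem (pairRel_mem fc ha 𝔄.id_mem) rc.app_mem) ?_
  intro x y h
  exact ⟨_, ⟨a, x, rfl, rfl, rfl⟩, h⟩

lemma points_closed {a b c : 𝔄.A} (ha : a ∈ points 𝔄) (hb : b ∈ points 𝔄)
    (h : rc.app (fc.meet a b) c) : c ∈ points 𝔄 :=
  point_of_rel (app_point_mem rc ha) hb h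

lemma exists_k : ∃ k ∈ points 𝔄, ∀ x y,
    ∃ kx, rc.app (fc.meet k x) kx ∧ rc.app (fc.meet kx y) x := by
  obtain ⟨rt, hrt, H⟩ := rc.complete _ fc.proj_left
  obtain ⟨k, hk, hk'⟩ := exists_tracker rc hrt
  refine ⟨k, hk, fun x y => ?_⟩
  obtain ⟨h, hh, hc⟩ := H x
  exact ⟨h, hk' _ _ hh, hc _ _ ⟨_, _, rfl, rfl⟩⟩

/-- The relation sending `(x ∧ y) ∧ z` to `(x · z) · (y · z)`. -/
def sRel : 𝔄.A → 𝔄.A → Prop :=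
  compRel
    (pairRel fc
      (compRel (pairRel fc (compRel (fstRel fc) (fstRel fc)) (sndRel fc)) rc.app)
      (compRel (pairRel fc (compRel (fstRel fc) (sndRel fc)) (sndRel fc)) rc.app))
    rc.app

lemma sRel_mem : sRel rc ∈ 𝔄.R := by
  have h₁ : fstRel fc ∈ 𝔄.R := fc.proj_left
  have h₂ : sndRel fc ∈ 𝔄.R := fc.proj_right
  exact compRel_mem (pairRel_mem fc
    (compRel_mem (pairRel_mem fc (compRel_mem h₁ h₁) h₂) rc.app_mem)
    (compRel_mem (pairRel_mem fc (compRel_mem h₁ h₂) h₂) rc.app_mem)) rc.app_mem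

lemma sRel_apply {x y z p q w : 𝔄.A} (hp : rc.app (fc.meet x z) p)
    (hq : rc.app (fc.meet y z) q) (hw : rc.app (fc.meet p q) w) :
    sRel rc (fc.meet (fc.meet x y) z) w :=
  ⟨_, ⟨p, q,
    ⟨_, ⟨x, z, ⟨_, ⟨_, _, rfl, rfl⟩, ⟨_, _, rfl, rfl⟩⟩, ⟨_, _, rfl, rfl⟩, rfl⟩, hp⟩,
    ⟨_, ⟨y, z, ⟨_, ⟨_, _, rfl, rfl⟩, ⟨_, _, rfl, rfl⟩⟩, ⟨_, _, rfl, rfl⟩, rfl⟩, hq⟩, rfl⟩, hw⟩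

lemma exists_s : ∃ s ∈ points 𝔄, ∀ x y, ∃ sx sxy,
    rc.app (fc.meet s x) sx ∧ rc.app (fc.meet sx y) sxy ∧
    ∀ z p q w, rc.app (fc.meet x z) p → rc.app (fc.meet y z) q → rc.app (fc.meet p q) w →
      rc.app (fc.meet sxy z) w := by
  obtain ⟨rt, hrt, H⟩ := rc.complete _ (sRel_mem rc)
  obtain ⟨rtt, hrtt, H'⟩ := rc.complete _ hrt
  obtain ⟨s, hs, hs'⟩ := exists_tracker rc hrtt
  refine ⟨s, hs, fun x y => ?_⟩
  obtain ⟨sx, hsx, hx⟩ := H' x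
  obtain ⟨sxy, hsxy, hxy⟩ := H (fc.meet x y)
  exact ⟨sx, sxy, hs' _ _ hsx, hx _ _ hsxy,
    fun z p q w hp hq hw => hxy _ _ (sRel_apply rc hp hq hw)⟩

end UPO1

/-- STATEMENT 2: Every one-sorted relationally complete functional uniform preorder `(A,R)`
is induced by an inclusion of pcas: there are a pca structure on `A` and a sub-pca
`A_# ⊆ A` such that `R` consists exactly of the subrelations of the graphs of the partial
maps `(a · −)` with `a ∈ A_#`. -/
theorem stmt2 (𝔄 : UPO1) (fc : FinComplete1 𝔄) (rc : RelComplete1 𝔄 fc)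
    (hfun : 𝔄.Functional) :
    ∃ (Pc : PCAStruct 𝔄.A) (S : SubPCA Pc),
      𝔄.R = {r : 𝔄.A → 𝔄.A → Prop |
        ∃ a ∈ S.S, ∀ x y, r x y → Pc.op a x = some y} := by
  have op_iff : ∀ {a b c : 𝔄.A}, UPO1.appOp rc a b = some c ↔ rc.app (fc.meet a b) c :=
    UPO1.appOp_eq_some rc hfun
  obtain ⟨k, hk, hk'⟩ := UPO1.exists_k rc
  obtain ⟨s, hs, hs'⟩ := UPO1.exists_s rc
  let Pc : PCAStruct 𝔄.A :=
    { op := UPO1.appOp rc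
      k := k
      s := s
      k_spec := by simpa only [op_iff] using hk'
      s_def := by
        intro x y
        obtain ⟨sx, sxy, h₁, h₂, -⟩ := hs' x y
        exact ⟨sx, sxy, op_iff.2 h₁, op_iff.2 h₂⟩
      s_spec := by
        rintro x y z w ⟨p, q, hp, hq, hw⟩
        obtain ⟨sx, sxy, h₁, h₂, h₃⟩ := hs' x y
        exact ⟨sx, sxy, op_iff.2 h₁, op_iff.2 h₂,
          op_iff.2 (h₃ z p q w (op_iff.1 hp) (op_iff.1 hq) (op_iff.1 hw))⟩ }
  refine ⟨Pc, ⟨UPO1.points 𝔄,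
    fun a ha b hb c h => UPO1.points_closed rc ha hb (op_iff.1 h),
    k, hk, Pc.k_spec, s, hs, Pc.s_def, Pc.s_spec⟩, ?_⟩
  ext r
  constructor
  · intro hr
    obtain ⟨a, ha, h⟩ := UPO1.exists_tracker rc hr
    exact ⟨a, ha, fun x y hxy => op_iff.2 (h x y hxy)⟩
  · rintro ⟨a, ha, h⟩
    exact 𝔄.mem_of_le (UPO1.app_point_mem rc ha) fun x y hxy => op_iff.1 (h x y hxy)
end

section
/- Let P be a Heyting algebra, Q a Boolean algebra, and let π : P → Q and δ : Q → P be monotone maps forming a Galois connection π ⊣ δ which is a reflection (π(δ(q)) = q for all q), such that π preserves binary meets and δ preserves the bottom element (δ(⊥) = ⊥). Then δ(π(φ)) = ¬¬φ for every φ ∈ P. (This is the fiberwise content of the statement that for a totally connected tripos 𝒫 on a boolean topos, δπφ ≅ ¬¬φ for every predicate φ; the hypotheses δ(⊥) = ⊥, π meet-preserving and π∘δ = id are what total connectedness over a boolean base supplies fiberwise.) -/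
/-- STATEMENT 19: If `π ⊣ δ` is a Galois connection from a Heyting algebra `P` to a Boolean
algebra `Q` which is a reflection, `π` preserves binary meets and `δ` preserves `⊥`, then
`δ (π φ) = ¬¬φ` for every `φ ∈ P`. -/
theorem stmt19 {P Q : Type*} [HeytingAlgebra P] [BooleanAlgebra Q]
    (π : P → Q) (δ : Q → P) (hπ : Monotone π) (hδ : Monotone δ)
    (gc : GaloisConnection π δ)
    (hrefl : ∀ q : Q, π (δ q) = q)
    (hmeet : ∀ a b : P, π (a ⊓ b) = π a ⊓ π b)
    (hbot : δ ⊥ = ⊥) :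
    ∀ φ : P, δ (π φ) = φᶜᶜ := by
  have hcompl : ∀ a : P, aᶜ = δ (π a)ᶜ := by
    intro a
    refine eq_of_forall_le_iff fun p => ?_
    -- `p ≤ aᶜ ↔ p ⊓ a ≤ δ ⊥ ↔ π p ⊓ π a ≤ ⊥ ↔ p ≤ δ (π a)ᶜ`
    rw [le_compl_iff_disjoint_right, disjoint_iff_inf_le, ← hbot, ← gc, hmeet,
      ← disjoint_iff_inf_le, ← le_compl_iff_disjoint_right, gc]
  intro φ
  rw [hcompl φᶜ, hcompl φ, hrefl, compl_compl]
end
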